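/- arXiv:1701.06677 — 3 statements merged into one kernel-verified Lean document; each statement's English description precedes it below -/
import Mathlib

section
/- For all i, j ≥ 1 one has MB^m_{(i)} ⊆ MZ^m_{(j)}. Moreover, for a ∈ MZ^m_{(r)} and any r-chain (ω₁, …, ω_r) starting from a, the element θω_r is a cocycle, its cohomology class lies in MZ^{m+1}_{(N)} for every N ≥ 1, and its class modulo MB^{m+1}_{(r)} depends only on a; consequently a ↦ ⟨θ, a⟩_r descends to a well-defined ℂ-linear map Δ_r : MH^m_{(r)} → MH^{m+1}_{(r)} of degree 1. -/
namespace Massey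

variable (N : ℤ → Type) [∀ k, AddCommGroup (N k)] [∀ k, Module ℂ (N k)]
variable (d θ : ∀ i j : ℤ, N i →ₗ[ℂ] N j)

/-- The cocycles in degree `m`. -/
noncomputable abbrev Z (m : ℤ) : Submodule ℂ (N m) := LinearMap.ker (d m (m + 1))

/-- The coboundaries in degree `m`, as a submodule of the cocycles. -/
noncomputable abbrev Bsub (m : ℤ) : Submodule ℂ (Z N d m) :=
  (LinearMap.range (d (m - 1) m)).comap (Z N d m).subtype

/-- The cohomology `H^m(N*) = Z^m / B^m`. -/
noncomputable abbrev Hcoh (m : ℤ) := Z N d m ⧸ Bsub N d m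

/-- The cohomology class of a cocycle. -/
noncomputable def cl (m : ℤ) (x : N m) (hx : d m (m + 1) x = 0) : Hcoh N d m :=
  Submodule.Quotient.mk ⟨x, LinearMap.mem_ker.mpr hx⟩

/-- `ω` is an `r`-chain: `d ω₀ = 0` and `d ω_{i+1} = θ ω_i`. -/
def IsChain (m : ℤ) (r : ℕ) (ω : Fin r → N m) : Prop :=
  (∀ h0 : 0 < r, d m (m + 1) (ω ⟨0, h0⟩) = 0) ∧
  ∀ (i : ℕ) (h : i + 1 < r), d m (m + 1) (ω ⟨i + 1, h⟩) = θ m (m + 1) (ω ⟨i, by omega⟩)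

/-- `MZ^m_{(r)}`: classes in `H^m` admitting an `r`-chain starting from them. -/
def MZset (m : ℤ) (r : ℕ) : Set (Hcoh N d m) :=
  {a | ∃ (h0 : 0 < r) (ω : Fin r → N m) (hc : IsChain N d θ m r ω),
    a = cl N d m (ω ⟨0, h0⟩) (hc.1 h0)}

/-- `MB^m_{(r)}`: classes in `H^m` of the cocycles `θ ω_{r-1}` over all
`(r-1)`-chains `ω` (in degree `m - 1`). -/
def MBset (m : ℤ) (r : ℕ) : Set (Hcoh N d m) :=
  {b | ∃ (hr : 0 < r - 1) (ω : Fin (r - 1) → N (m - 1))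
    (_hc : IsChain N d θ (m - 1) (r - 1) ω)
    (hz : d m (m + 1) (θ (m - 1) m (ω ⟨r - 1 - 1, by omega⟩)) = 0),
    b = cl N d m (θ (m - 1) m (ω ⟨r - 1 - 1, by omega⟩)) hz}

/-- `MZ^m_{(r)}` as a submodule (it is a linear subspace, cf. the theorem). -/
noncomputable def MZsub (m : ℤ) (r : ℕ) : Submodule ℂ (Hcoh N d m) :=
  Submodule.span ℂ (MZset N d θ m r)

/-- `MB^m_{(r)}` as a submodule (it is a linear subspace, cf. the theorem). -/
noncomputable def MBsub (m : ℤ) (r : ℕ) : Submodule ℂ (Hcoh N d m) :=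
  Submodule.span ℂ (MBset N d θ m r)

/-- `MH^m_{(r)} = MZ^m_{(r)} / MB^m_{(r)}`. -/
noncomputable abbrev MH (m : ℤ) (r : ℕ) :=
  MZsub N d θ m r ⧸ (MBsub N d θ m r).comap (MZsub N d θ m r).subtype


variable {N d θ}

theorem last_lt {r : ℕ} (hr : 0 < r) : r - 1 < r := by omega

theorem span_eq_of_closed {V : Type*} [AddCommGroup V] [Module ℂ V] (S : Set V)
    (h0 : (0 : V) ∈ S) (ha : ∀ x ∈ S, ∀ y ∈ S, x + y ∈ S)
    (hs : ∀ (c : ℂ), ∀ x ∈ S, c • x ∈ S) :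
    (Submodule.span ℂ S : Set V) = S := by
  let P : Submodule ℂ V :=
    { carrier := S
      zero_mem' := h0
      add_mem' := fun {x y} hx hy => ha x hx y hy
      smul_mem' := fun c x hx => hs c x hx }
  have : Submodule.span ℂ S = P := Submodule.span_eq P
  rw [this]
  rfl

theorem IsChain.zero (m : ℤ) (r : ℕ) : IsChain N d θ m r (fun _ => 0) := by
  constructor
  · intro _; simp
  · intro i h; simp

theorem IsChain.add {m : ℤ} {r : ℕ} {ω η : Fin r → N m} (h : IsChain N d θ m r ω)
    (h' : IsChain N d θ m r η) : IsChain N d θ m r (fun i => ω i + η i) := by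
  constructor
  · intro h0; simp [h.1 h0, h'.1 h0]
  · intro i hi; simp [h.2 i hi, h'.2 i hi]

theorem IsChain.smul {m : ℤ} {r : ℕ} {ω : Fin r → N m} (c : ℂ) (h : IsChain N d θ m r ω) :
    IsChain N d θ m r (fun i => c • ω i) := by
  constructor
  · intro h0; simp [h.1 h0]
  · intro i hi; simp [h.2 i hi]

theorem cl_add {m : ℤ} {x y : N m} (hx : d m (m + 1) x = 0) (hy : d m (m + 1) y = 0)
    (hz : d m (m + 1) (x + y) = 0) : cl N d m (x + y) hz = cl N d m x hx + cl N d m y hy := rfl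

theorem cl_smul {m : ℤ} (c : ℂ) {x : N m} (hx : d m (m + 1) x = 0)
    (hz : d m (m + 1) (c • x) = 0) : cl N d m (c • x) hz = c • cl N d m x hx := rfl

theorem cl_sub {m : ℤ} {x y : N m} (hx : d m (m + 1) x = 0) (hy : d m (m + 1) y = 0)
    (hz : d m (m + 1) (x - y) = 0) : cl N d m (x - y) hz = cl N d m x hx - cl N d m y hy := rfl

theorem cl_congr {m : ℤ} {x y : N m} (hx : d m (m + 1) x = 0) (hy : d m (m + 1) y = 0)
    (h : x = y) : cl N d m x hx = cl N d m y hy := by subst h; rfl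

theorem cl_eq_zero {m : ℤ} {x : N m} (hx : d m (m + 1) x = 0) :
    cl N d m x hx = 0 ↔ ∃ ξ : N (m - 1), d (m - 1) m ξ = x := by
  unfold cl
  rw [Submodule.Quotient.mk_eq_zero]
  simp

theorem cl_eq_zero_of {m k : ℤ} (hk : k = m - 1) {x : N m} (hx : d m (m + 1) x = 0)
    (ξ : N k) (h : d k m ξ = x) : cl N d m x hx = 0 := by
  subst hk
  exact (cl_eq_zero hx).2 ⟨ξ, h⟩

theorem mem_MB_of {m k : ℤ} (hk : k = m - 1) {r : ℕ} (hr : 0 < r - 1) (ω : Fin (r - 1) → N k)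
    (hc : IsChain N d θ k (r - 1) ω)
    (hz : d m (m + 1) (θ k m (ω ⟨r - 1 - 1, by omega⟩)) = 0) :
    cl N d m (θ k m (ω ⟨r - 1 - 1, by omega⟩)) hz ∈ MBset N d θ m r := by
  subst hk
  exact ⟨hr, ω, hc, hz, rfl⟩

section
variable (hθd : ∀ i j l : ℤ, (θ j l).comp (d i j) = -((d j l).comp (θ i j)))
variable (hθθ : ∀ i j l : ℤ, (θ j l).comp (θ i j) = 0)

theorem dth (hθd : ∀ i j l : ℤ, (θ j l).comp (d i j) = -((d j l).comp (θ i j)))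
    (i j l : ℤ) (x : N i) : d j l (θ i j x) = - θ j l (d i j x) := by
  have := LinearMap.congr_fun (hθd i j l) x
  simp only [LinearMap.comp_apply, LinearMap.neg_apply] at this
  rw [this, neg_neg]

theorem thth (hθθ : ∀ i j l : ℤ, (θ j l).comp (θ i j) = 0)
    (i j l : ℤ) (x : N i) : θ j l (θ i j x) = 0 :=
  LinearMap.congr_fun (hθθ i j l) x

theorem cocycle_last (hθd : ∀ i j l : ℤ, (θ j l).comp (d i j) = -((d j l).comp (θ i j)))
    (hθθ : ∀ i j l : ℤ, (θ j l).comp (θ i j) = 0)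
    {m : ℤ} {r : ℕ} (hr : 0 < r) {ω : Fin r → N m} (h : IsChain N d θ m r ω) :
    d (m + 1) (m + 1 + 1) (θ m (m + 1) (ω ⟨r - 1, last_lt hr⟩)) = 0 := by
  rw [dth hθd]
  obtain ⟨r, rfl⟩ : ∃ s, r = s + 1 := ⟨r - 1, by omega⟩
  cases r with
  | zero =>
    have := h.1 hr
    simp only [Nat.zero_add, Nat.sub_self]
    rw [this]; simp
  | succ r =>
    have := h.2 r (by omega)
    simp only [Nat.add_sub_cancel]
    rw [this, thth hθθ]; simp

/-- The chain `(x, 0, 0, ...)`. -/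
theorem isChain_single {m : ℤ} (r : ℕ) (x : N m) (hx : d m (m + 1) x = 0)
    (hx' : θ m (m + 1) x = 0) :
    IsChain N d θ m r (fun i => if (i : ℕ) = 0 then x else 0) := by
  constructor
  · intro _; simpa using hx
  · intro i h
    by_cases hi : i = 0 <;> simp [hi, hx']

theorem single_mem_MZ {m : ℤ} {r : ℕ} (hr : 1 ≤ r) (x : N m) (hx : d m (m + 1) x = 0)
    (hx' : θ m (m + 1) x = 0) : cl N d m x hx ∈ MZset N d θ m r :=
  ⟨hr, _, isChain_single r x hx hx', cl_congr _ _ (by simp)⟩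

theorem indep (hθd : ∀ i j l : ℤ, (θ j l).comp (d i j) = -((d j l).comp (θ i j)))
    (hθθ : ∀ i j l : ℤ, (θ j l).comp (θ i j) = 0)
    {m : ℤ} {r : ℕ} (hr : 0 < r) {η : Fin r → N m} (h : IsChain N d θ m r η)
    (h0 : cl N d m (η ⟨0, hr⟩) (h.1 hr) = 0)
    (hz : d (m + 1) (m + 1 + 1) (θ m (m + 1) (η ⟨r - 1, last_lt hr⟩)) = 0) :
    cl N d (m + 1) (θ m (m + 1) (η ⟨r - 1, last_lt hr⟩)) hz ∈ MBsub N d θ (m + 1) r := by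
  obtain ⟨ξ, hξ⟩ := (cl_eq_zero _).1 h0
  obtain ⟨r, rfl⟩ : ∃ s, r = s + 1 := ⟨r - 1, by omega⟩
  cases r with
  | zero =>
    have : cl N d (m + 1) (θ m (m + 1) (η ⟨0 + 1 - 1, by omega⟩)) hz = 0 := by
      refine cl_eq_zero_of (k := m) (by ring) hz (-(θ (m - 1) m ξ)) ?_
      rw [map_neg, dth hθd, neg_neg, hξ]
    rw [this]
    exact Submodule.zero_mem _
  | succ r =>
    apply Submodule.subset_span
    let ζ : Fin (r + 1 + 1 - 1) → N m := fun i =>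
      η ⟨i + 1, by omega⟩ + if (i : ℕ) = 0 then θ (m - 1) m ξ else 0
    have hθζ : ∀ i, θ m (m + 1) (ζ i) = θ m (m + 1) (η ⟨i + 1, by omega⟩) := by
      intro i
      simp only [ζ]
      split_ifs <;> simp [thth hθθ]
    have hζ : IsChain N d θ m (r + 1 + 1 - 1) ζ := by
      constructor
      · intro hh
        have := h.2 0 (by omega)
        simp only [ζ, map_add, if_true]
        rw [this, dth hθd, hξ]
        simp
      · intro i hi
        rw [hθζ, ← h.2 (i + 1) (by omega)]
        simp [ζ]
    have e := hθζ ⟨r + 1 + 1 - 1 - 1, by omega⟩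
    have hz' : d (m + 1) (m + 1 + 1) (θ m (m + 1) (ζ ⟨r + 1 + 1 - 1 - 1, by omega⟩)) = 0 := by
      rw [e]; exact hz
    have := mem_MB_of (k := m) (m := m + 1) (by ring) (r := r + 1 + 1) (by omega) ζ hζ hz'
    rw [cl_congr hz hz' e.symm]
    exact this

end

/-- `b` is a value of the `r`-fold product on `a`. -/
def Rel (N : ℤ → Type) [∀ k, AddCommGroup (N k)] [∀ k, Module ℂ (N k)]
    (d θ : ∀ i j : ℤ, N i →ₗ[ℂ] N j) (m : ℤ) (r : ℕ) (a : Hcoh N d m)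
    (b : Hcoh N d (m + 1)) : Prop :=
  ∃ (hr : 0 < r) (ω : Fin r → N m) (hc : IsChain N d θ m r ω)
    (hz : d (m + 1) (m + 1 + 1) (θ m (m + 1) (ω ⟨r - 1, last_lt hr⟩)) = 0),
    a = cl N d m (ω ⟨0, hr⟩) (hc.1 hr) ∧
    b = cl N d (m + 1) (θ m (m + 1) (ω ⟨r - 1, last_lt hr⟩)) hz

theorem Rel.add {m : ℤ} {r : ℕ} {a a' : Hcoh N d m} {b b' : Hcoh N d (m + 1)}
    (h : Rel N d θ m r a b) (h' : Rel N d θ m r a' b') :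
    Rel N d θ m r (a + a') (b + b') := by
  obtain ⟨hr, ω, hc, hz, rfl, rfl⟩ := h
  obtain ⟨_, ω', hc', hz', rfl, rfl⟩ := h'
  have e := map_add (θ m (m + 1)) (ω ⟨r - 1, last_lt hr⟩) (ω' ⟨r - 1, last_lt hr⟩)
  refine ⟨hr, _, hc.add hc', by rw [e, map_add, hz, hz', add_zero], rfl, ?_⟩
  rw [← cl_add hz hz' (by rw [map_add, hz, hz', add_zero])]
  exact cl_congr _ _ e.symm

theorem Rel.smul {m : ℤ} {r : ℕ} {a : Hcoh N d m} {b : Hcoh N d (m + 1)} (c : ℂ)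
    (h : Rel N d θ m r a b) : Rel N d θ m r (c • a) (c • b) := by
  obtain ⟨hr, ω, hc, hz, rfl, rfl⟩ := h
  have e := map_smul (θ m (m + 1)) c (ω ⟨r - 1, last_lt hr⟩)
  refine ⟨hr, _, hc.smul c, by rw [e, map_smul, hz, smul_zero], rfl, ?_⟩
  rw [← cl_smul c hz (by rw [map_smul, hz, smul_zero])]
  exact cl_congr _ _ e.symm

theorem Rel.uniq (hθd : ∀ i j l : ℤ, (θ j l).comp (d i j) = -((d j l).comp (θ i j)))
    (hθθ : ∀ i j l : ℤ, (θ j l).comp (θ i j) = 0)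
    {m : ℤ} {r : ℕ} {a : Hcoh N d m} {b b' : Hcoh N d (m + 1)}
    (h : Rel N d θ m r a b) (h' : Rel N d θ m r a b') : b - b' ∈ MBsub N d θ (m + 1) r := by
  have := h.add (h'.smul (-1))
  simp only [neg_smul, one_smul, ← sub_eq_add_neg, sub_self] at this
  obtain ⟨hr, ω, hc, hz, h0, h1⟩ := this
  rw [h1]
  exact indep hθd hθθ hr hc h0.symm hz

theorem MZ_closed (m : ℤ) (r : ℕ) (hr : 1 ≤ r) :
    (MZsub N d θ m r : Set (Hcoh N d m)) = MZset N d θ m r := by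
  apply span_eq_of_closed
  · exact ⟨hr, _, IsChain.zero m r, rfl⟩
  · rintro _ ⟨_, ω, hc, rfl⟩ _ ⟨_, ω', hc', rfl⟩
    exact ⟨hr, _, hc.add hc', rfl⟩
  · rintro c _ ⟨_, ω, hc, rfl⟩
    exact ⟨hr, _, hc.smul c, rfl⟩

theorem MB_closed (m : ℤ) (r : ℕ) (hr : 2 ≤ r) :
    (MBsub N d θ m r : Set (Hcoh N d m)) = MBset N d θ m r := by
  apply span_eq_of_closed
  · refine ⟨by omega, _, IsChain.zero (m - 1) (r - 1), by simp, ?_⟩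
    symm
    exact cl_eq_zero_of rfl _ 0 (by simp)
  · rintro _ ⟨h0, ω, hc, hz, rfl⟩ _ ⟨_, ω', hc', hz', rfl⟩
    have e := map_add (θ (m - 1) m) (ω ⟨r - 1 - 1, by omega⟩) (ω' ⟨r - 1 - 1, by omega⟩)
    refine ⟨h0, _, hc.add hc', by rw [e, map_add, hz, hz', add_zero], ?_⟩
    rw [← cl_add hz hz' (by rw [map_add, hz, hz', add_zero])]
    exact cl_congr _ _ e.symm
  · rintro c _ ⟨h0, ω, hc, hz, rfl⟩
    have e := map_smul (θ (m - 1) m) c (ω ⟨r - 1 - 1, by omega⟩)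
    refine ⟨h0, _, hc.smul c, by rw [e, map_smul, hz, smul_zero], ?_⟩
    rw [← cl_smul c hz (by rw [map_smul, hz, smul_zero])]
    exact cl_congr _ _ e.symm

theorem Rel.of_MB (hθθ : ∀ i j l : ℤ, (θ j l).comp (θ i j) = 0)
    {m : ℤ} {r : ℕ} (hr : 1 ≤ r) {a : Hcoh N d m} (ha : a ∈ MBsub N d θ m r) :
    Rel N d θ m r a 0 := by
  have h00 : Rel N d θ m r 0 0 := by
    refine ⟨hr, _, IsChain.zero m r, by simp, rfl, ?_⟩
    symm
    exact cl_eq_zero_of (k := m) (by ring) _ 0 (by simp)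
  refine Submodule.span_induction (p := fun x _ => Rel N d θ m r x 0) ?_ h00 ?_ ?_ ha
  · rintro _ ⟨h0, ω, hc, hz, rfl⟩
    have hl : θ m (m + 1) ((fun i : Fin r => if (i : ℕ) = 0 then
        θ (m - 1) m (ω ⟨r - 1 - 1, by omega⟩) else 0) ⟨r - 1, last_lt hr⟩) = 0 := by
      have : r - 1 ≠ 0 := by omega
      simp [this]
    refine ⟨hr, _, isChain_single r _ hz (thth hθθ _ _ _ _), by rw [hl, map_zero],
      cl_congr _ _ (by simp), ?_⟩
    symm
    exact cl_eq_zero_of (k := m) (by ring) _ 0 (by rw [hl, map_zero])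
  · intro x y _ _ hx hy
    simpa using hx.add hy
  · intro c x _ hx
    simpa using hx.smul c

theorem exists_rel (hθd : ∀ i j l : ℤ, (θ j l).comp (d i j) = -((d j l).comp (θ i j)))
    (hθθ : ∀ i j l : ℤ, (θ j l).comp (θ i j) = 0)
    {m : ℤ} {r : ℕ} (hr : 1 ≤ r) (a : MZsub N d θ m r) :
    ∃ b : MZsub N d θ (m + 1) r, Rel N d θ m r a b := by
  obtain ⟨a, ha⟩ := a
  have ha' : a ∈ MZset N d θ m r := by rw [← MZ_closed m r hr]; exact ha
  obtain ⟨h0, ω, hc, rfl⟩ := ha'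
  have hz := cocycle_last hθd hθθ hr hc
  exact ⟨⟨_, Submodule.subset_span (single_mem_MZ hr _ hz (thth hθθ _ _ _ _))⟩,
    hr, ω, hc, hz, rfl, rfl⟩

theorem exists_Delta (hθd : ∀ i j l : ℤ, (θ j l).comp (d i j) = -((d j l).comp (θ i j)))
    (hθθ : ∀ i j l : ℤ, (θ j l).comp (θ i j) = 0)
    (m : ℤ) (r : ℕ) (hr : 1 ≤ r) :
    ∃ Δ : MH N d θ m r →ₗ[ℂ] MH N d θ (m + 1) r,
      ∀ (a : MZsub N d θ m r) (b : MZsub N d θ (m + 1) r), Rel N d θ m r a b →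
        Δ (Submodule.Quotient.mk a) = Submodule.Quotient.mk b := by
  choose f hf using exists_rel (N := N) (m := m) (r := r) hθd hθθ hr
  have key : ∀ (a : MZsub N d θ m r) (b b' : MZsub N d θ (m + 1) r),
      Rel N d θ m r a b → Rel N d θ m r a b' →
      (Submodule.Quotient.mk b : MH N d θ (m + 1) r) = Submodule.Quotient.mk b' := by
    intro a b b' h h'
    rw [Submodule.Quotient.eq]
    exact h.uniq hθd hθθ h'
  let F : MZsub N d θ m r →ₗ[ℂ] MH N d θ (m + 1) r :=
    { toFun := fun a => Submodule.Quotient.mk (f a)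
      map_add' := fun x y => by
        rw [← Submodule.Quotient.mk_add]
        exact key (x + y) _ _ (hf _) ((hf x).add (hf y))
      map_smul' := fun c x => by
        rw [RingHom.id_apply, ← Submodule.Quotient.mk_smul]
        exact key (c • x) _ _ (hf _) ((hf x).smul c) }
  refine ⟨Submodule.liftQ _ F ?_, ?_⟩
  · intro a ha
    rw [LinearMap.mem_ker]
    exact key a _ 0 (hf a) (Rel.of_MB hθθ hr ha)
  · intro a b h
    exact key a _ _ (hf a) h

variable (N d θ)

/-- Let `(N*, d)` be a cochain complex of complex vector spaces and
`θ` a degree-one map with `θd = -dθ` and `θθ = 0` (both given by components `d i j`,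
`θ i j` vanishing unless `j = i + 1`).  Then:
(a) `MB^m_{(i)} ⊆ MZ^m_{(j)}` for all `i, j ≥ 1`;
(b) `MZ^m_{(r)}` (for `r ≥ 1`) and `MB^m_{(r)}` (for `r ≥ 2`) are linear subspaces of
`H^m(N*)`;
(c) for `a ∈ MZ^m_{(r)}` and any `r`-chain `ω` starting from `a`, the element `θ ω_r`
is a cocycle;
(d) its class lies in `MZ^{m+1}_{(N)}` for every `N ≥ 1`;
(e) its class modulo `MB^{m+1}_{(r)}` depends only on `a`;
(f) consequently `a ↦ ⟨θ, a⟩_r` descends to a well-defined `ℂ`-linear map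
`Δ_r : MH^m_{(r)} → MH^{m+1}_{(r)}` of degree `1`. -/
theorem massey_products_well_defined
    (hd : ∀ i j : ℤ, j ≠ i + 1 → d i j = 0)
    (hθ : ∀ i j : ℤ, j ≠ i + 1 → θ i j = 0)
    (hdd : ∀ i j l : ℤ, (d j l).comp (d i j) = 0)
    (hθd : ∀ i j l : ℤ, (θ j l).comp (d i j) = -((d j l).comp (θ i j)))
    (hθθ : ∀ i j l : ℤ, (θ j l).comp (θ i j) = 0) :
    -- (a)
    (∀ (m : ℤ) (i j : ℕ), 1 ≤ i → 1 ≤ j → MBset N d θ m i ⊆ MZset N d θ m j) ∧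
    -- (b)
    (∀ (m : ℤ) (r : ℕ), 1 ≤ r → (MZsub N d θ m r : Set (Hcoh N d m)) = MZset N d θ m r) ∧
    (∀ (m : ℤ) (r : ℕ), 2 ≤ r → (MBsub N d θ m r : Set (Hcoh N d m)) = MBset N d θ m r) ∧
    -- (c)
    (∀ (m : ℤ) (r : ℕ) (hr : 0 < r) (ω : Fin r → N m), IsChain N d θ m r ω →
      d (m + 1) (m + 1 + 1) (θ m (m + 1) (ω ⟨r - 1, by omega⟩)) = 0) ∧
    -- (d)
    (∀ (m : ℤ) (r : ℕ) (hr : 0 < r) (ω : Fin r → N m), IsChain N d θ m r ω →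
      ∀ (NN : ℕ), 1 ≤ NN →
      ∀ hz : d (m + 1) (m + 1 + 1) (θ m (m + 1) (ω ⟨r - 1, by omega⟩)) = 0,
        cl N d (m + 1) (θ m (m + 1) (ω ⟨r - 1, by omega⟩)) hz ∈ MZset N d θ (m + 1) NN) ∧
    -- (e)
    (∀ (m : ℤ) (r : ℕ) (hr : 0 < r) (ω ω' : Fin r → N m)
      (hc : IsChain N d θ m r ω) (hc' : IsChain N d θ m r ω'),
      cl N d m (ω ⟨0, hr⟩) (hc.1 hr) = cl N d m (ω' ⟨0, hr⟩) (hc'.1 hr) →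
      ∀ (hz : d (m + 1) (m + 1 + 1) (θ m (m + 1) (ω ⟨r - 1, by omega⟩)) = 0)
        (hz' : d (m + 1) (m + 1 + 1) (θ m (m + 1) (ω' ⟨r - 1, by omega⟩)) = 0),
        cl N d (m + 1) (θ m (m + 1) (ω ⟨r - 1, by omega⟩)) hz -
          cl N d (m + 1) (θ m (m + 1) (ω' ⟨r - 1, by omega⟩)) hz' ∈
            MBsub N d θ (m + 1) r) ∧
    -- (f)
    (∀ (m : ℤ) (r : ℕ), 1 ≤ r →
      ∃ Δ : MH N d θ m r →ₗ[ℂ] MH N d θ (m + 1) r,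
        ∀ (a : Hcoh N d m) (ha : a ∈ MZsub N d θ m r)
          (hr : 0 < r) (ω : Fin r → N m) (hc : IsChain N d θ m r ω),
          a = cl N d m (ω ⟨0, hr⟩) (hc.1 hr) →
          ∀ (b : Hcoh N d (m + 1)) (hb : b ∈ MZsub N d θ (m + 1) r)
            (hz : d (m + 1) (m + 1 + 1) (θ m (m + 1) (ω ⟨r - 1, by omega⟩)) = 0),
            b = cl N d (m + 1) (θ m (m + 1) (ω ⟨r - 1, by omega⟩)) hz →
            Δ (Submodule.Quotient.mk ⟨a, ha⟩) = Submodule.Quotient.mk ⟨b, hb⟩) := by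
  refine ⟨?_, MZ_closed, MB_closed, ?_, ?_, ?_, ?_⟩
  · rintro m i j hi hj _ ⟨h0, ω, hc, hz, rfl⟩
    exact single_mem_MZ hj _ hz (thth hθθ _ _ _ _)
  · intro m r hr ω hc
    exact cocycle_last hθd hθθ hr hc
  · intro m r hr ω hc NN hN hz
    exact single_mem_MZ hN _ hz (thth hθθ _ _ _ _)
  · intro m r hr ω ω' hc hc' h hz hz'
    exact Rel.uniq hθd hθθ ⟨hr, ω, hc, hz, rfl, rfl⟩ ⟨hr, ω', hc', hz', h, rfl⟩
  · intro m r hr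
    obtain ⟨Δ, hΔ⟩ := exists_Delta (N := N) hθd hθθ m r hr
    refine ⟨Δ, ?_⟩
    intro a ha h0 ω hc hac b hb hz hbc
    exact hΔ ⟨a, ha⟩ ⟨b, hb⟩ ⟨h0, ω, hc, hz, hac, hbc⟩

end Massey
end

section
/- For every r ≥ 1 the map Δ_r : MH^*_{(r)} → MH^{*+1}_{(r)} satisfies Δ_r ∘ Δ_r = 0, and for every m the cohomology Ker(Δ_r : MH^m_{(r)} → MH^{m+1}_{(r)}) / Im(Δ_r : MH^{m−1}_{(r)} → MH^m_{(r)}) is isomorphic to MH^m_{(r+1)}. -/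
namespace Massey

variable (N : ℤ → Type) [∀ k, AddCommGroup (N k)] [∀ k, Module ℂ (N k)]
variable (d θ : ∀ i j : ℤ, N i →ₗ[ℂ] N j)

section aux
variable {N : ℤ → Type} [∀ k, AddCommGroup (N k)] [∀ k, Module ℂ (N k)]
variable {d θ : ∀ i j : ℤ, N i →ₗ[ℂ] N j}

def Rep (d : ∀ i j : ℤ, N i →ₗ[ℂ] N j) (m : ℤ) (b : Hcoh N d m) (x : N m) : Prop :=
  ∃ hx : d m (m + 1) x = 0, b = cl N d m x hx

theorem Rep.add {m : ℤ} {a b : Hcoh N d m} {x y : N m} (h1 : Rep d m a x) (h2 : Rep d m b y) :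
    Rep d m (a + b) (x + y) := by
  obtain ⟨hx, rfl⟩ := h1
  obtain ⟨hy, rfl⟩ := h2
  exact ⟨by rw [map_add, hx, hy, add_zero], rfl⟩

theorem Rep.sub {m : ℤ} {a b : Hcoh N d m} {x y : N m} (h1 : Rep d m a x) (h2 : Rep d m b y) :
    Rep d m (a - b) (x - y) := by
  obtain ⟨hx, rfl⟩ := h1
  obtain ⟨hy, rfl⟩ := h2
  exact ⟨by rw [map_sub, hx, hy, sub_zero], rfl⟩

theorem Rep.smul {m : ℤ} {a : Hcoh N d m} {x : N m} (c : ℂ) (h1 : Rep d m a x) :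
    Rep d m (c • a) (c • x) := by
  obtain ⟨hx, rfl⟩ := h1
  exact ⟨by rw [map_smul, hx, smul_zero], rfl⟩

theorem Rep.zero {m : ℤ} : Rep d m 0 0 := ⟨map_zero _, rfl⟩

theorem Rep.uniq {m : ℤ} {a b : Hcoh N d m} {x : N m} (h1 : Rep d m a x) (h2 : Rep d m b x) :
    a = b := by
  obtain ⟨hx, rfl⟩ := h1
  obtain ⟨hy, rfl⟩ := h2
  rfl

theorem rep_zero_iff' {m k : ℤ} (hk : m - 1 = k) {x : N m} :
    Rep d m 0 x ↔ d m (m + 1) x = 0 ∧ ∃ z : N k, d k m z = x := by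
  subst hk
  constructor
  · rintro ⟨hx, h⟩
    refine ⟨hx, ?_⟩
    have := (Submodule.Quotient.mk_eq_zero _).1 h.symm
    exact this
  · rintro ⟨hx, h⟩
    refine ⟨hx, ?_⟩
    symm
    exact (Submodule.Quotient.mk_eq_zero _).2 h

theorem rep_zero_iff {m : ℤ} {x : N (m + 1)} :
    Rep d (m + 1) 0 x ↔ d (m + 1) (m + 1 + 1) x = 0 ∧ ∃ z : N m, d m (m + 1) z = x :=
  rep_zero_iff' (by ring)

def C (d θ : ∀ i j : ℤ, N i →ₗ[ℂ] N j) (m : ℤ) (r : ℕ) (ω : ℕ → N m) : Prop :=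
  d m (m + 1) (ω 0) = 0 ∧ ∀ i, i + 1 < r → d m (m + 1) (ω (i + 1)) = θ m (m + 1) (ω i)

theorem C.add {m : ℤ} {r : ℕ} {x y : ℕ → N m} (h1 : C d θ m r x) (h2 : C d θ m r y) :
    C d θ m r (x + y) :=
  ⟨by simp [h1.1, h2.1], fun i hi => by simp [h1.2 i hi, h2.2 i hi]⟩

theorem C.sub {m : ℤ} {r : ℕ} {x y : ℕ → N m} (h1 : C d θ m r x) (h2 : C d θ m r y) :
    C d θ m r (x - y) :=
  ⟨by simp [h1.1, h2.1], fun i hi => by simp [h1.2 i hi, h2.2 i hi]⟩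

theorem C.smul {m : ℤ} {r : ℕ} {x : ℕ → N m} (c : ℂ) (h1 : C d θ m r x) :
    C d θ m r (c • x) :=
  ⟨by simp [h1.1], fun i hi => by simp [h1.2 i hi]⟩

theorem C.zero {m : ℤ} {r : ℕ} : C d θ m r 0 :=
  ⟨by simp, fun i hi => by simp⟩

theorem C.mono {m : ℤ} {r s : ℕ} (h : s ≤ r) {x : ℕ → N m} (h1 : C d θ m r x) :
    C d θ m s x := ⟨h1.1, fun i hi => h1.2 i (by omega)⟩

/-- restriction to Fin -/
theorem C.toFin {m : ℤ} {r : ℕ} {x : ℕ → N m} (h1 : C d θ m r x) :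
    IsChain N d θ m r (fun i => x i) :=
  ⟨fun _ => h1.1, fun i hi => h1.2 i hi⟩

theorem C.ofFin {m : ℤ} {r : ℕ} {ω : Fin r → N m} (h : IsChain N d θ m r ω) (h0 : 0 < r) :
    C d θ m r (fun i => if hi : i < r then ω ⟨i, hi⟩ else 0) := by
  refine ⟨?_, fun i hi => ?_⟩
  · simp only [h0, dif_pos]; exact h.1 h0
  · have hi' : i < r := by omega
    simp only [hi, hi', dif_pos]; exact h.2 i hi

theorem mem_MZ {m : ℤ} {r : ℕ} (hr : 1 ≤ r) {a : Hcoh N d m} :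
    a ∈ MZsub N d θ m r ↔ ∃ ω, C d θ m r ω ∧ Rep d m a (ω 0) := by
  constructor
  · intro h
    induction h using Submodule.span_induction with
    | mem x hx =>
      obtain ⟨h0, ω, hc, rfl⟩ := hx
      refine ⟨_, C.ofFin hc h0, ?_⟩
      simp only [h0, dif_pos]
      exact ⟨hc.1 h0, rfl⟩
    | zero => exact ⟨0, C.zero, Rep.zero⟩
    | add x y _ _ hx hy =>
      obtain ⟨u, hu, hu'⟩ := hx
      obtain ⟨v, hv, hv'⟩ := hy
      exact ⟨u + v, hu.add hv, hu'.add hv'⟩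
    | smul c x _ hx =>
      obtain ⟨u, hu, hu'⟩ := hx
      exact ⟨c • u, hu.smul c, hu'.smul c⟩
  · rintro ⟨ω, hω, hz, rfl⟩
    exact Submodule.subset_span ⟨hr, _, hω.toFin, rfl⟩

theorem mem_MB_succ' {m k : ℤ} (hk : m - 1 = k) {r : ℕ} (hr : 1 ≤ r) {b : Hcoh N d m} :
    b ∈ MBsub N d θ m (r + 1) ↔ ∃ ω, C d θ k r ω ∧ Rep d m b (θ k m (ω (r - 1))) := by
  have e : k + 1 = m := by omega
  subst hk
  constructor
  · intro h
    induction h using Submodule.span_induction with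
    | mem x hx =>
      obtain ⟨h0, ω, hc, hz, rfl⟩ := hx
      refine ⟨_, C.ofFin hc h0, ?_⟩
      have : r - 1 < r := by omega
      simp only [this, dif_pos]
      exact ⟨hz, rfl⟩
    | zero => exact ⟨0, C.zero, by simpa using Rep.zero⟩
    | add x y _ _ hx hy =>
      obtain ⟨u, hu, hu'⟩ := hx
      obtain ⟨v, hv, hv'⟩ := hy
      exact ⟨u + v, hu.add hv, by simpa using hu'.add hv'⟩
    | smul c x _ hx =>
      obtain ⟨u, hu, hu'⟩ := hx
      exact ⟨c • u, hu.smul c, by simpa using hu'.smul c⟩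
  · rintro ⟨ω, hω, hz, rfl⟩
    exact Submodule.subset_span ⟨hr, fun i => ω i, hω.toFin, hz, rfl⟩

theorem mem_MB_succ {m : ℤ} {r : ℕ} (hr : 1 ≤ r) {b : Hcoh N d (m + 1)} :
    b ∈ MBsub N d θ (m + 1) (r + 1) ↔
      ∃ ω, C d θ m r ω ∧ Rep d (m + 1) b (θ m (m + 1) (ω (r - 1))) :=
  mem_MB_succ' (by ring) hr

theorem mem_MB {m : ℤ} {r : ℕ} (hr : 1 ≤ r) {b : Hcoh N d (m + 1)} :
    b ∈ MBsub N d θ (m + 1) r ↔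
      ∃ ω, C d θ m r ω ∧ ω 0 = 0 ∧ Rep d (m + 1) b (θ m (m + 1) (ω (r - 1))) := by
  obtain ⟨s, rfl⟩ : ∃ s, r = s + 1 := ⟨r - 1, by omega⟩
  rcases Nat.eq_zero_or_pos s with rfl | hs
  · have h1 : MBset N d θ (m + 1) (0 + 1) = ∅ := by
      ext x
      simp [MBset]
    rw [MBsub, h1, Submodule.span_empty, Submodule.mem_bot]
    constructor
    · rintro rfl
      exact ⟨0, C.zero, rfl, by simpa using Rep.zero⟩
    · rintro ⟨ω, _, h0, h⟩
      simp only [zero_add, Nat.sub_self, h0, map_zero] at h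
      exact h.uniq Rep.zero
  · rw [mem_MB_succ hs]
    obtain ⟨t, rfl⟩ : ∃ t, s = t + 1 := ⟨s - 1, by omega⟩
    constructor
    · rintro ⟨ω, hω, h⟩
      refine ⟨fun i => match i with | 0 => 0 | j + 1 => ω j, ⟨by simp, ?_⟩, rfl, by simpa using h⟩
      rintro (_ | i) hi
      · simpa using hω.1
      · exact hω.2 i (by omega)
    · rintro ⟨ω, hω, h0, h⟩
      refine ⟨fun i => ω (i + 1), ⟨?_, fun i hi => hω.2 (i + 1) (by omega)⟩, by simpa using h⟩
      have := hω.2 0 (by omega)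
      simpa [h0] using this

end aux


set_option maxHeartbeats 2000000 in
set_option synthInstance.maxHeartbeats 400000 in
/-- With `(N*, d, θ)` as before, let `Δ` be the family of Massey
product differentials `Δ_r : MH^m_{(r)} → MH^{m+1}_{(r)}` (characterized by sending
the class of `a = [ω₁]` to the class of `θ ω_r` for any `r`-chain `ω` starting
from `a`).  Then `Δ_r ∘ Δ_r = 0` and for every degree the cohomology
`Ker Δ_r / Im Δ_r` is isomorphic to `MH_{(r+1)}`. -/
theorem massey_differential_squares_to_zero_and_cohomology
    (hd : ∀ i j : ℤ, j ≠ i + 1 → d i j = 0)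
    (hθ : ∀ i j : ℤ, j ≠ i + 1 → θ i j = 0)
    (hdd : ∀ i j l : ℤ, (d j l).comp (d i j) = 0)
    (hθd : ∀ i j l : ℤ, (θ j l).comp (d i j) = -((d j l).comp (θ i j)))
    (hθθ : ∀ i j l : ℤ, (θ j l).comp (θ i j) = 0)
    (r : ℕ) (hr : 1 ≤ r)
    (Δ : ∀ m : ℤ, MH N d θ m r →ₗ[ℂ] MH N d θ (m + 1) r)
    (hΔ : ∀ (m : ℤ) (a : Hcoh N d m) (ha : a ∈ MZsub N d θ m r)
      (h0 : 0 < r) (ω : Fin r → N m) (hc : IsChain N d θ m r ω),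
      a = cl N d m (ω ⟨0, h0⟩) (hc.1 h0) →
      ∀ (b : Hcoh N d (m + 1)) (hb : b ∈ MZsub N d θ (m + 1) r)
        (hz : d (m + 1) (m + 1 + 1) (θ m (m + 1) (ω ⟨r - 1, by omega⟩)) = 0),
        b = cl N d (m + 1) (θ m (m + 1) (ω ⟨r - 1, by omega⟩)) hz →
        Δ m (Submodule.Quotient.mk ⟨a, ha⟩) = Submodule.Quotient.mk ⟨b, hb⟩) :
    -- `Δ_r ∘ Δ_r = 0`:
    (∀ m : ℤ, (Δ (m + 1)).comp (Δ m) = 0) ∧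
    -- `Ker Δ_r / Im Δ_r ≅ MH_{(r+1)}` (in every degree `m + 1`):
    (∀ m : ℤ, Nonempty
      ((↥(LinearMap.ker (Δ (m + 1))) ⧸
          (LinearMap.range (Δ m)).comap (LinearMap.ker (Δ (m + 1))).subtype)
        ≃ₗ[ℂ] MH N d θ (m + 1) (r + 1))) := by
  have cz : ∀ (m : ℤ) (ω : ℕ → N m), C d θ m r ω →
      d (m + 1) (m + 1 + 1) (θ m (m + 1) (ω (r - 1))) = 0 := by
    intro m ω hω
    have h1 := LinearMap.congr_fun (hθd m (m + 1) (m + 1 + 1)) (ω (r - 1))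
    have h2 : θ (m + 1) (m + 1 + 1) (d m (m + 1) (ω (r - 1))) = 0 := by
      obtain ⟨s, rfl⟩ : ∃ s, r = s + 1 := ⟨r - 1, by omega⟩
      rcases s with _ | s
      · simp [hω.1]
      · have := hω.2 s (by omega)
        simp only [Nat.add_sub_cancel]
        rw [this]
        exact LinearMap.congr_fun (hθθ m (m + 1) (m + 1 + 1)) _
    simp only [LinearMap.comp_apply, LinearMap.neg_apply, h2] at h1
    exact neg_eq_zero.1 h1.symm
  have single : ∀ (m : ℤ) (ω : ℕ → N m), C d θ m r ω → ∀ s,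
      C d θ (m + 1) s (fun i => if i = 0 then θ m (m + 1) (ω (r - 1)) else 0) := by
    intro m ω hω s
    refine ⟨by simpa using cz m ω hω, fun i _ => ?_⟩
    by_cases hi : i = 0
    · have := LinearMap.congr_fun (hθθ m (m + 1) (m + 1 + 1)) (ω (r - 1))
      simp only [LinearMap.comp_apply, LinearMap.zero_apply] at this
      simp [hi, this]
    · simp [hi]
  have bz : ∀ (m : ℤ) (ω : ℕ → N m), C d θ m r ω → ∀ b,
      Rep d (m + 1) b (θ m (m + 1) (ω (r - 1))) → ∀ s, 1 ≤ s → b ∈ MZsub N d θ (m + 1) s := by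
    intro m ω hω b hb s hs
    exact (mem_MZ hs).2 ⟨_, single m ω hω s, by simpa using hb⟩
  have D : ∀ (m : ℤ) (ω : ℕ → N m), C d θ m r ω → ∀ a (ha : a ∈ MZsub N d θ m r),
      Rep d m a (ω 0) → ∀ b (hb : b ∈ MZsub N d θ (m + 1) r),
      Rep d (m + 1) b (θ m (m + 1) (ω (r - 1))) →
      Δ m (Submodule.Quotient.mk ⟨a, ha⟩) = Submodule.Quotient.mk ⟨b, hb⟩ := by
    rintro m ω hω a ha ⟨h1, h2⟩ b hb ⟨h3, h4⟩
    exact hΔ m a ha hr (fun i => ω i) hω.toFin h2 b hb h3 h4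
  -- existence form
  have E : ∀ (m : ℤ) (x : MH N d θ m r), ∃ (ω : ℕ → N m) (_ : C d θ m r ω) (a : Hcoh N d m)
      (ha : a ∈ MZsub N d θ m r) (_ : Rep d m a (ω 0)) (b : Hcoh N d (m + 1))
      (hb : b ∈ MZsub N d θ (m + 1) r) (_ : Rep d (m + 1) b (θ m (m + 1) (ω (r - 1)))),
      x = Submodule.Quotient.mk ⟨a, ha⟩ ∧ Δ m x = Submodule.Quotient.mk ⟨b, hb⟩ := by
    intro m x
    obtain ⟨⟨a, ha⟩, rfl⟩ := Submodule.Quotient.mk_surjective _ x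
    obtain ⟨ω, hω, h1⟩ := (mem_MZ hr).1 ha
    have h2 : Rep d (m + 1) _ (θ m (m + 1) (ω (r - 1))) := ⟨cz m ω hω, rfl⟩
    have hb := bz m ω hω _ h2 r hr
    exact ⟨ω, hω, a, ha, h1, _, hb, h2, rfl, D m ω hω a ha h1 _ hb h2⟩
  have sq : ∀ m : ℤ, (Δ (m + 1)).comp (Δ m) = 0 := by
    intro m
    refine LinearMap.ext fun x => ?_
    obtain ⟨ω, hω, a, ha, h1, b, hb, h2, -, hx⟩ := E m x
    rw [LinearMap.comp_apply, hx, LinearMap.zero_apply]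
    rw [D (m + 1) _ (single m ω hω r) b hb (by simpa using h2) 0 (Submodule.zero_mem _) ?_]
    · exact Submodule.Quotient.mk_zero _
    · by_cases hi : r - 1 = 0
      · have := LinearMap.congr_fun (hθθ m (m + 1) (m + 1 + 1)) (ω (r - 1))
        simp only [LinearMap.comp_apply, LinearMap.zero_apply] at this
        simp only [hi, if_true] at this ⊢
        rw [this]
        exact Rep.zero
      · simpa [hi] using Rep.zero
  refine ⟨sq, fun m => ?_⟩
  have le : MZsub N d θ (m + 1) (r + 1) ≤ MZsub N d θ (m + 1) r := by
    intro a ha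
    obtain ⟨ω, hω, h1⟩ := (mem_MZ (by omega)).1 ha
    exact (mem_MZ hr).2 ⟨ω, hω.mono (by omega), h1⟩
  let g : MZsub N d θ (m + 1) (r + 1) →ₗ[ℂ] MH N d θ (m + 1) r :=
    (Submodule.mkQ _).comp (Submodule.inclusion le)
  have gk : ∀ x, g x ∈ LinearMap.ker (Δ (m + 1)) := by
    rintro ⟨a, ha⟩
    obtain ⟨ω, hω, h1⟩ := (mem_MZ (by omega)).1 ha
    have hω' := hω.mono (s := r) (by omega)
    rw [LinearMap.mem_ker]
    refine (D (m + 1) ω hω' a (le ha) h1 0 (Submodule.zero_mem _) ?_).trans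
      (Submodule.Quotient.mk_zero _)
    have h3 := hω.2 (r - 1) (by omega)
    exact rep_zero_iff.2 ⟨cz _ _ hω', _, h3⟩
  let f := (Submodule.mkQ ((LinearMap.range (Δ m)).comap
    (LinearMap.ker (Δ (m + 1))).subtype)).comp (g.codRestrict _ gk)
  have fs : Function.Surjective f := by
    intro y
    obtain ⟨⟨x, hx⟩, rfl⟩ := Submodule.Quotient.mk_surjective _ y
    obtain ⟨ω, hω, a, ha, h1, b, hb, h2, rfl, hx2⟩ := E (m + 1) x
    rw [LinearMap.mem_ker, hx2, Submodule.Quotient.mk_eq_zero] at hx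
    obtain ⟨η, hη, h0, h3⟩ := (mem_MB hr).1 (show b ∈ MBsub N d θ (m + 1 + 1) r from hx)
    have h4 := h2.sub h3
    rw [sub_self] at h4
    obtain ⟨-, ζ, hζ⟩ := rep_zero_iff.1 h4
    have ha' : a ∈ MZsub N d θ (m + 1) (r + 1) := by
      refine (mem_MZ (by omega)).2 ⟨fun i => if i < r then ω i - η i else ζ, ⟨?_, ?_⟩, ?_⟩
      · simp [Nat.lt_of_lt_of_le Nat.zero_lt_one hr, hω.1, hη.1]
      · intro i hi
        have hi' : i < r := by omega
        by_cases hj : i + 1 < r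
        · simp [hi', hj, hω.2 i hj, hη.2 i hj]
        · have : i = r - 1 := by omega
          simp only [hi', hj, if_true, if_false]
          rw [hζ, map_sub, this]
      · simpa [Nat.lt_of_lt_of_le Nat.zero_lt_one hr, h0] using h1
    exact ⟨⟨a, ha'⟩, rfl⟩
  have fk : LinearMap.ker f = (MBsub N d θ (m + 1) (r + 1)).comap
      (MZsub N d θ (m + 1) (r + 1)).subtype := by
    ext ⟨a, ha⟩
    have e1 : (⟨a, ha⟩ ∈ LinearMap.ker f) ↔ ∃ y, Δ m y = Submodule.Quotient.mk ⟨a, le ha⟩ := by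
      rw [LinearMap.mem_ker]
      exact Submodule.Quotient.mk_eq_zero _
    rw [e1]
    change _ ↔ a ∈ MBsub N d θ (m + 1) (r + 1)
    rw [mem_MB_succ hr]
    constructor
    · rintro ⟨y, hy⟩
      obtain ⟨ω, hω, a', ha', h1, b, hb, h2, rfl, hx2⟩ := E m y
      rw [hx2] at hy
      have h3 := (Submodule.Quotient.eq _).1 hy.symm
      obtain ⟨η, hη, h0, h4⟩ := (mem_MB hr).1 (show a - b ∈ MBsub N d θ (m + 1) r from h3)
      refine ⟨η + ω, hη.add hω, ?_⟩
      simpa using h4.add h2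
    · rintro ⟨ω, hω, h⟩
      have h2 : Rep d m _ (ω 0) := ⟨hω.1, rfl⟩
      have h3 := (mem_MZ hr).2 ⟨ω, hω, h2⟩
      exact ⟨_, D m ω hω _ h3 h2 a (le ha) h⟩
  exact ⟨((Submodule.quotEquivOfEq _ _ fk).symm.trans (f.quotKerEquivOfSurjective fs)).symm⟩

end Massey
end

section
/- Let (D, E, i, j, l) be a graded exact couple of complex vector spaces: D = ⊕_{k∈ℤ} D^k and E = ⊕_{k∈ℤ} E^k are graded vector spaces, i : D → D and l : E → D are linear maps of degree 0, j : D → E is a linear map of degree 1, and Im i = Ker j, Im j = Ker l, Im l = Ker i. Fix k and suppose D^k = A ⊕ B where A and B are i-invariant subspaces, the restriction of i to A is nilpotent with i^m(A) = 0, and the restriction of i to B is injective. Then the spectral sequence induced by the exact couple degenerates in degree k at sheet m+1; concretely, for every r ≥ m, every x ∈ E^k with l(x) ∈ Im(i^r), and every y ∈ D^k with i^r(y) = l(x), one has l(x) = 0, y ∈ Ker(i^r), and hence j(y) ∈ j(Ker(i^r)) (so all differentials d_{r+1} emanating from degree k vanish). -/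
/-- Let `(D, E, i, j, l)` be a graded exact couple of complex vector
spaces with `deg i = deg l = 0`, `deg j = 1`.  Fix a degree `k` and suppose
`D^k = A ⊕ B` with `A`, `B` invariant under `i`, `i` nilpotent on `A` with `i^m(A)=0`
and `i` injective on `B`.  Then the induced spectral sequence degenerates at sheet
`m+1` in degree `k`: for every `r ≥ m`, every `x ∈ E^k` with `l x ∈ Im (i^r)` and
every `y` with `i^r y = l x`, one has `l x = 0`, `y ∈ Ker (i^r)`, and hence
`j y ∈ j (Ker (i^r))`. -/
theorem exact_couple_degeneration
    (D E : ℤ → Type*) [∀ k, AddCommGroup (D k)] [∀ k, Module ℂ (D k)]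
    [∀ k, AddCommGroup (E k)] [∀ k, Module ℂ (E k)]
    (i : ∀ k, D k →ₗ[ℂ] D k) (j : ∀ k, D k →ₗ[ℂ] E (k + 1)) (l : ∀ k, E k →ₗ[ℂ] D k)
    (hij : ∀ k, LinearMap.range (i k) = LinearMap.ker (j k))
    (hjl : ∀ k, LinearMap.range (j k) = LinearMap.ker (l (k + 1)))
    (hli : ∀ k, LinearMap.range (l k) = LinearMap.ker (i k))
    (k : ℤ) (m : ℕ) (A B : Submodule ℂ (D k))
    (hABinf : A ⊓ B = ⊥) (hABsup : A ⊔ B = ⊤)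
    (hA : ∀ x ∈ A, i k x ∈ A) (hB : ∀ x ∈ B, i k x ∈ B)
    (hnil : ∀ x ∈ A, ((i k) ^ m) x = 0)
    (hinj : ∀ x ∈ B, i k x = 0 → x = 0) :
    ∀ r : ℕ, m ≤ r → ∀ (x : E k) (y : D k), ((i k) ^ r) y = l k x →
      l k x = 0 ∧ ((i k) ^ r) y = 0 ∧
      j k y ∈ (LinearMap.ker ((i k) ^ r)).map (j k) := by
  intro r hr x y hy
  have hBp : ∀ n : ℕ, ∀ b ∈ B, ((i k) ^ n) b ∈ B := by
    intro n
    induction n with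
    | zero => intro b hb; simpa using hb
    | succ n ih =>
      intro b hb
      rw [pow_succ, Module.End.mul_apply]
      exact ih _ (hB b hb)
  have hyAB : y ∈ A ⊔ B := by rw [hABsup]; exact Submodule.mem_top
  obtain ⟨a, ha, b, hb, rfl⟩ := Submodule.mem_sup.mp hyAB
  have ha0 : ((i k) ^ r) a = 0 := by
    obtain ⟨n, rfl⟩ := Nat.exists_eq_add_of_le' hr
    rw [pow_add, Module.End.mul_apply, hnil a ha, map_zero]
  have hlx : i k (l k x) = 0 := by
    have h : l k x ∈ LinearMap.ker (i k) := by
      rw [← hli k]; exact LinearMap.mem_range_self _ x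
    exact h
  have hmem : l k x ∈ B := by
    rw [← hy, map_add, ha0, zero_add]
    exact hBp r b hb
  have h0 : l k x = 0 := hinj _ hmem hlx
  have h1 := hy.trans h0
  exact ⟨h0, h1, Submodule.mem_map_of_mem (LinearMap.mem_ker.mpr h1)⟩
end
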